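/- Let a : ℝ → ℝ be a C^∞, 2π-periodic, strictly positive function normalized so that ∫₀^{2π} a(θ)^{−1}dθ = 2π. Then Z_{k+1}(a) ≥ Z_k(a) for every integer k ≥ 1. -/

import Mathlib

open MeasureTheory Real

noncomputable section

/-- The `k`-th Fourier coefficient of a `2π`-periodic function `u : ℝ → ℂ`:
`û(k) = (1/2π) ∫₀^{2π} u(θ) e^{-ikθ} dθ`. -/
def fCoef (u : ℝ → ℂ) (k : ℤ) : ℂ :=
  (2 * Real.pi)⁻¹ * ∫ θ in (0:ℝ)..(2 * Real.pi), u θ * Complex.exp (-Complex.I * k * θ)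

/-- `prodPoly m j n = n(n+j₁)(n+j₁+j₂)⋯(n+j₁+⋯+j_{m-1})`. -/
def prodPoly (m : ℕ) (j : Fin m → ℤ) (n : ℤ) : ℤ :=
  ∏ i : Fin m, (n + ∑ l ∈ Finset.Iio i, j l)

/-- The coefficient `N_{j₁…j_m} = ∑ₙ (|n(n+j₁)⋯(n+j₁+⋯+j_{m-1})| - n(n+j₁)⋯(n+j₁+⋯+j_{m-1}))`;
only finitely many summands are nonzero. -/
def Ncoef (m : ℕ) (j : Fin m → ℤ) : ℝ :=
  ∑' n : ℤ, ((|prodPoly m j n| - prodPoly m j n : ℤ) : ℝ)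

/-- A term of the series defining the zeta-invariant `Z_k(a)`:
`N_{j₁…j_{2k}} â(j₁)⋯â(j_{2k})` for `j₁+⋯+j_{2k} = 0`. -/
def zetaTerm (k : ℕ) (a : ℝ → ℝ) (j : {j : Fin (2 * k) → ℤ // ∑ i, j i = 0}) : ℂ :=
  (Ncoef (2 * k) j.val : ℂ) * ∏ i, fCoef (fun θ => (a θ : ℂ)) (j.val i)

/-- The zeta-invariant `Z_k(a) = ∑_{j₁+⋯+j_{2k}=0} N_{j₁…j_{2k}} â(j₁)⋯â(j_{2k})`. -/
def ZetaInv (k : ℕ) (a : ℝ → ℝ) : ℂ :=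
  ∑' j : {j : Fin (2 * k) → ℤ // ∑ i, j i = 0}, zetaTerm k a j


lemma conv_growth (N : ℝ) (hN : 1 ≤ N) (μ : ℕ → ℝ) (h0 : μ 0 = 1) (h1 : N ≤ μ 1)
    (hc : ∀ i, 0 ≤ μ (i+2) - 2 * N * μ (i+1) + N^2 * μ i) (m : ℕ) :
    N^(m+2) - N^m ≤ μ (m+2) - μ m := by
  have hd : ∀ i, N * μ i ≤ μ (i+1) := by
    intro i
    induction i with
    | zero => simpa [h0] using h1
    | succ i ih =>
      have := hc i
      nlinarith
  have hp : ∀ i, N^i ≤ μ i := by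
    intro i
    induction i with
    | zero => simp [h0]
    | succ i ih =>
      have := hd i
      rw [pow_succ]
      nlinarith
  have h2 : N^2 * μ m ≤ μ (m+2) := by
    have := hd m
    have := hd (m+1)
    nlinarith
  have h3 := hp m
  have : N^(m+2) = N^2 * N^m := by ring
  rw [this]
  nlinarith [mul_nonneg (by nlinarith : (0:ℝ) ≤ N^2 - 1) (sub_nonneg.2 h3)]

lemma abs_growth {V : Type*} [AddCommGroup V] [Module ℂ V]
    (B : V →ₗ⋆[ℂ] V →ₗ[ℂ] ℂ) (C L : V →ₗ[ℂ] V)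
    (hB : ∀ x y, starRingEnd ℂ (B x y) = B y x)
    (hC : ∀ x y, B (C x) y = B x (C y)) (hL : ∀ x y, B (L x) y = B x (L y))
    (pC : ∀ x, 0 ≤ (B x (C x)).re) (pL : ∀ x, 0 ≤ (B x (L x)).re)
    (v u : V) (N : ℝ) (hN : 1 ≤ N) (hu : C u = (N:ℂ) • v) (hvu : B v u = N)
    (hvL : N ≤ (B v (L v)).re) (m : ℕ) :
    N^(m+3) - N^(m+1) ≤ (B v (L (((fun x => C (L x))^[m+2]) v))).re
      - (B v (L (((fun x => C (L x))^[m]) v))).re := by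
  set p : ℕ → V := fun i => (fun x => C (L x))^[i] v with hp
  have p0 : p 0 = v := rfl
  have ps : ∀ i, p (i+1) = C (L (p i)) := fun i => by
    simp only [hp, Function.iterate_succ_apply']
  have hc1 : ∀ i j, B (p (i+1)) (L (p j)) = B (p i) (L (p (j+1))) := by
    intro i j
    rw [ps, hC, hL, ← ps]
  have hc : ∀ i j, B (p i) (L (p j)) = B v (L (p (i+j))) := by
    intro i
    induction i with
    | zero => intro j; simp [p0]
    | succ i ih => intro j; rw [hc1, ih]; congr 3; ring_nf
  have hreal : ∀ x y, (B x y).re = (B y x).re := by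
    intro x y; rw [← hB]; simp
  have hNr : ∀ z : ℂ, ((N:ℂ) * z).re = N * z.re := by intro z; simp
  let μ : ℕ → ℝ := fun i => match i with
    | 0 => 1
    | (i+1) => (B v (L (p i))).re
  refine conv_growth N hN μ rfl hvL ?_ (m+1)
  intro i
  have hLq : ∀ r s, (B (L (p r)) (p s)).re = (B v (L (p (r+s)))).re := by
    intro r s; rw [hL, hc]
  have hodd : ∀ r, 0 ≤ μ (2*r+1+2) - 2 * N * μ (2*r+1+1) + N^2 * μ (2*r+1) := by
    intro r
    have h := pL (p (r+1) - (N:ℂ) • p r)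
    simp only [map_sub, map_smul, map_smulₛₗ, LinearMap.sub_apply, LinearMap.smul_apply, hc,
      smul_eq_mul, Complex.conj_ofReal, Complex.sub_re, hNr] at h
    have e1 : r + 1 + (r+1) = 2*r+2 := by ring
    have e2 : r + 1 + r = 2*r+1 := by ring
    have e3 : r + (r + 1) = 2*r+1 := by ring
    have e4 : r + r = 2*r := by ring
    rw [e1, e2, e3, e4] at h
    change 0 ≤ (B v (L (p (2*r+2)))).re - 2 * N * (B v (L (p (2*r+1)))).re + N^2 * (B v (L (p (2*r)))).re
    linarith
  have hev0 : 0 ≤ μ 2 - 2 * N * μ 1 + N^2 * μ 0 := by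
    have h := pC (L v - u)
    have e1 : (B (L v) v).re = (B v (L v)).re := hreal _ _
    have e2 : (B u (C (L v))).re = N * (B v (L v)).re := by
      rw [← hC, hu, map_smulₛₗ, LinearMap.smul_apply, Complex.conj_ofReal, smul_eq_mul, hNr]
    have e3 : (B u v).re = N := by rw [hreal, hvu]; simp
    have e4 : B (L v) (C (L v)) = B v (L (p 1)) := by
      rw [hL, ps, p0]
    simp only [map_sub, LinearMap.sub_apply, Complex.sub_re, hu, map_smul, smul_eq_mul, hNr, e1, e2, e3, e4] at h
    change 0 ≤ (B v (L (p 1))).re - 2 * N * (B v (L v)).re + N^2 * 1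
    linarith
  have hev : ∀ r, 0 ≤ μ (2*(r+1)+2) - 2 * N * μ (2*(r+1)+1) + N^2 * μ (2*(r+1)) := by
    intro r
    have h := pC (L (p (r+1) - (N:ℂ) • p r))
    simp only [map_sub, map_smul, map_smulₛₗ, LinearMap.sub_apply, LinearMap.smul_apply, ← ps, hL, hc,
      smul_eq_mul, Complex.conj_ofReal, Complex.sub_re, hNr] at h
    have e1 : r + 1 + (r+1+1) = 2*r+3 := by ring
    have e2 : r + 1 + (r+1) = 2*r+2 := by ring
    have e3 : r + (r + 1 + 1) = 2*r+2 := by ring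
    have e4 : r + (r + 1) = 2*r + 1:= by ring
    rw [e1, e2, e3, e4] at h
    change 0 ≤ (B v (L (p (2*r+3)))).re - 2 * N * (B v (L (p (2*r+2)))).re + N^2 * (B v (L (p (2*r+1)))).re
    linarith
  obtain ⟨r, hr | hr⟩ := Nat.even_or_odd' i
  · cases r with
    | zero => subst hr; exact hev0
    | succ r => subst hr; exact hev r
  · subst hr; exact hodd r

/-- weight -/
def wt (n : ℤ) : ℝ := 1 + |(n:ℝ)|

lemma wt_pos (n : ℤ) : 0 < wt n := by unfold wt; positivity
lemma one_le_wt (n : ℤ) : 1 ≤ wt n := by unfold wt; linarith [abs_nonneg (n:ℝ)]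
lemma wt_add (m n : ℤ) : wt (m + n) ≤ wt m * wt n := by
  unfold wt
  push_cast
  nlinarith [abs_add_le (m:ℝ) n, abs_nonneg (m:ℝ), abs_nonneg (n:ℝ), mul_nonneg (abs_nonneg (m:ℝ)) (abs_nonneg (n:ℝ))]

/-- rapidly decaying sequences -/
def RD (x : ℤ → ℂ) : Prop := ∀ N : ℕ, Summable fun n : ℤ => wt n ^ N * ‖x n‖

lemma RD.norm {x} (h : RD x) : Summable fun n => ‖x n‖ := by simpa using h 0

lemma RD.bdd {x} (h : RD x) : ∃ M, 0 ≤ M ∧ ∀ n, ‖x n‖ ≤ M :=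
  ⟨∑' n, ‖x n‖, tsum_nonneg fun _ => norm_nonneg _, fun n => h.norm.le_tsum n fun _ _ => norm_nonneg _⟩

lemma RD.add {x y} (hx : RD x) (hy : RD y) : RD (x + y) := fun N => by
  refine Summable.of_nonneg_of_le (fun n => mul_nonneg (pow_nonneg (wt_pos n).le _) (norm_nonneg _))
    (fun n => ?_) ((hx N).add (hy N))
  rw [← mul_add]
  exact mul_le_mul_of_nonneg_left (norm_add_le _ _) (pow_nonneg (wt_pos n).le _)

lemma RD.smul {x} (c : ℂ) (hx : RD x) : RD (c • x) := fun N => by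
  have := (hx N).mul_left ‖c‖
  refine this.congr fun n => ?_
  simp; ring

lemma RD.zero : RD 0 := fun N => by simp [summable_zero]

/-- Submodule of rapidly decaying sequences -/
def SS : Submodule ℂ (ℤ → ℂ) where
  carrier := {x | RD x}
  add_mem' := RD.add
  zero_mem' := RD.zero
  smul_mem' := fun c _ h => RD.smul c h

lemma RD.mulZ {x} (lam : ℤ → ℝ) (hl : ∀ n, |lam n| ≤ |(n:ℝ)|) (hx : RD x) :
    RD (fun n => (lam n : ℂ) * x n) := fun N => by
  refine Summable.of_nonneg_of_le (fun n => mul_nonneg (pow_nonneg (wt_pos n).le _) (norm_nonneg _))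
    (fun n => ?_) (hx (N+1))
  rw [norm_mul, Complex.norm_real, Real.norm_eq_abs, pow_succ, mul_assoc]
  gcongr
  · exact pow_nonneg (wt_pos n).le _
  · unfold wt; linarith [hl n]

/-- the equivalence `(y, x) ↦ (y - x, x)` -/
def shearE : ℤ × ℤ ≃ ℤ × ℤ where
  toFun p := (p.1 - p.2, p.2)
  invFun p := (p.1 + p.2, p.2)
  left_inv p := by simp
  right_inv p := by simp

lemma summable_shear {f h : ℤ → ℝ} (hf : Summable f) (hh : Summable h) (f0 : ∀ n, 0 ≤ f n) (h0 : ∀ n, 0 ≤ h n) :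
    Summable (fun p : ℤ × ℤ => h (p.1 - p.2) * f p.2) := by
  have := hh.mul_of_nonneg hf h0 f0
  exact (shearE.summable_iff (f := fun p : ℤ × ℤ => h p.1 * f p.2)).2 this

lemma conv_summable2 {α x : ℤ → ℂ} (hα : RD α) (hx : RD x) (N : ℕ) :
    Summable (fun p : ℤ × ℤ => wt p.1 ^ N * ‖α (p.1 - p.2) * x p.2‖) := by
  refine Summable.of_nonneg_of_le (fun p => mul_nonneg (pow_nonneg (wt_pos _).le _) (norm_nonneg _))
    (fun p => ?_) (summable_shear (hx N) (hα N) (fun n => mul_nonneg (pow_nonneg (wt_pos n).le _) (norm_nonneg _))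
      (fun n => mul_nonneg (pow_nonneg (wt_pos n).le _) (norm_nonneg _)))
  rw [norm_mul]
  calc wt p.1 ^ N * (‖α (p.1 - p.2)‖ * ‖x p.2‖) ≤ (wt (p.1-p.2) * wt p.2)^N * (‖α (p.1 - p.2)‖ * ‖x p.2‖) := by
        gcongr
        · exact (wt_pos _).le
        · simpa using wt_add (p.1-p.2) p.2
    _ = _ := by ring

/-- convolution -/
def cv (α x : ℤ → ℂ) (y : ℤ) : ℂ := ∑' n, α (y - n) * x n

lemma cv_summable {α x : ℤ → ℂ} (hα : RD α) (hx : RD x) (y : ℤ) :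
    Summable (fun n => ‖α (y - n) * x n‖) := by
  simpa using (conv_summable2 hα hx 0).prod_factor y

lemma RD.cv {α x : ℤ → ℂ} (hα : RD α) (hx : RD x) : RD (cv α x) := fun N => by
  have h := (conv_summable2 hα hx N)
  refine Summable.of_nonneg_of_le (fun n => mul_nonneg (pow_nonneg (wt_pos n).le _) (norm_nonneg _))
    (fun n => ?_) h.prod
  dsimp only
  rw [tsum_mul_left]
  exact mul_le_mul_of_nonneg_left (norm_tsum_le_tsum_norm (cv_summable hα hx n)) (pow_nonneg (wt_pos n).le _)

/-- conv as linear map -/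
def CL (α : ℤ → ℂ) (hα : RD α) : SS →ₗ[ℂ] SS where
  toFun x := ⟨cv α x, hα.cv x.2⟩
  map_add' x y := by
    ext n
    change cv α (x + y : ℤ → ℂ) n = cv α x n + cv α y n
    unfold cv
    rw [← (cv_summable hα x.2 n).of_norm.tsum_add (cv_summable hα y.2 n).of_norm]
    refine tsum_congr fun m => ?_
    simp [mul_add]
  map_smul' c x := by
    ext n
    change cv α (c • x : ℤ → ℂ) n = c * cv α x n
    unfold cv
    rw [← tsum_mul_left]
    refine tsum_congr fun m => ?_
    simp; ring

/-- multiplication operator -/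
def LL (lam : ℤ → ℝ) (hl : ∀ n, |lam n| ≤ |(n:ℝ)|) : SS →ₗ[ℂ] SS where
  toFun x := ⟨fun n => (lam n : ℂ) * x.1 n, RD.mulZ lam hl x.2⟩
  map_add' x y := by
    ext n
    simp [mul_add]
  map_smul' c x := by
    ext n
    simp; ring

lemma ip_summable {x y : ℤ → ℂ} (hx : RD x) (hy : RD y) :
    Summable (fun n => ‖starRingEnd ℂ (x n) * y n‖) := by
  obtain ⟨M, hM, hb⟩ := hx.bdd
  refine Summable.of_nonneg_of_le (fun n => norm_nonneg _) (fun n => ?_) (hy.norm.mul_left M)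
  rw [norm_mul, RCLike.norm_conj]
  exact mul_le_mul_of_nonneg_right (hb n) (norm_nonneg _)

/-- inner product -/
def BB : SS →ₗ⋆[ℂ] SS →ₗ[ℂ] ℂ :=
  LinearMap.mk₂'ₛₗ (starRingEnd ℂ) (RingHom.id ℂ)
    (fun x y => ∑' n, starRingEnd ℂ (x.1 n) * y.1 n)
    (fun x x' y => by
      rw [← (ip_summable x.2 y.2).of_norm.tsum_add (ip_summable x'.2 y.2).of_norm]
      refine tsum_congr fun m => ?_
      simp [add_mul])
    (fun c x y => by
      rw [smul_eq_mul, ← tsum_mul_left]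
      refine tsum_congr fun m => ?_
      simp; ring)
    (fun x y y' => by
      rw [← (ip_summable x.2 y.2).of_norm.tsum_add (ip_summable x.2 y'.2).of_norm]
      refine tsum_congr fun m => ?_
      simp [mul_add])
    (fun c x y => by
      rw [smul_eq_mul, ← tsum_mul_left]
      refine tsum_congr fun m => ?_
      simp; ring)

lemma BB_apply (x y : SS) : BB x y = ∑' n, starRingEnd ℂ (x.1 n) * y.1 n := rfl

lemma BB_conj (x y : SS) : starRingEnd ℂ (BB x y) = BB y x := by
  rw [BB_apply, BB_apply, Complex.conj_tsum]
  refine tsum_congr fun n => ?_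
  simp; ring

lemma LL_symm (lam hl) (x y : SS) : BB (LL lam hl x) y = BB x (LL lam hl y) := by
  rw [BB_apply, BB_apply]
  refine tsum_congr fun n => ?_
  simp [LL]; ring

lemma LL_pos (x : SS) (lam hl) (h0 : ∀ n, 0 ≤ lam n) : 0 ≤ (BB x (LL lam hl x)).re := by
  rw [BB_apply, Complex.re_tsum (ip_summable x.2 (LL lam hl x).2).of_norm]
  refine tsum_nonneg fun n => ?_
  have : starRingEnd ℂ (x.1 n) * (LL lam hl x).1 n = ((lam n * Complex.normSq (x.1 n) : ℝ) : ℂ) := by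
    simp only [LL, LinearMap.coe_mk, AddHom.coe_mk]
    push_cast
    rw [Complex.normSq_eq_conj_mul_self]; ring
  rw [this, Complex.ofReal_re]
  exact mul_nonneg (h0 n) (Complex.normSq_nonneg _)

lemma form_summable {α x y : ℤ → ℂ} (hα : RD α) (hx : RD x) (hy : RD y) :
    Summable (fun p : ℤ × ℤ => starRingEnd ℂ (x p.1) * (α (p.1 - p.2) * y p.2)) := by
  obtain ⟨M, hM, hb⟩ := hx.bdd
  have h := (conv_summable2 hα hy 0).mul_left M
  refine Summable.of_norm_bounded h (fun p => ?_)
  rw [norm_mul, RCLike.norm_conj, pow_zero, one_mul]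
  exact mul_le_mul_of_nonneg_right (hb _) (norm_nonneg _)

lemma form_eq {α : ℤ → ℂ} (hα : RD α) (x y : SS) :
    BB x (CL α hα y) = ∑' p : ℤ × ℤ, starRingEnd ℂ (x.1 p.1) * (α (p.1 - p.2) * y.1 p.2) := by
  rw [(form_summable hα x.2 y.2).tsum_prod, BB_apply]
  refine tsum_congr fun n => ?_
  dsimp only
  rw [tsum_mul_left]; rfl

lemma CL_symm {α : ℤ → ℂ} (hα : RD α) (hs : ∀ n, starRingEnd ℂ (α n) = α (-n)) (x y : SS) :
    BB (CL α hα x) y = BB x (CL α hα y) := by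
  rw [← BB_conj, form_eq, form_eq, Complex.conj_tsum, ← (Equiv.prodComm ℤ ℤ).tsum_eq]
  refine tsum_congr fun p => ?_
  simp [hs]; ring

lemma CL_pos {α : ℤ → ℂ} (hα : RD α)
    (hp : ∀ (s : Finset ℤ) (y : ℤ → ℂ), 0 ≤ (∑ n ∈ s, ∑ m ∈ s, starRingEnd ℂ (y n) * (α (n - m) * y m)).re)
    (x : SS) : 0 ≤ (BB x (CL α hα x)).re := by
  rw [form_eq]
  have h := (form_summable hα x.2 x.2).hasSum
  have h2 : Filter.Tendsto (fun s : Finset ℤ => s ×ˢ s) Filter.atTop Filter.atTop := by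
    refine Filter.tendsto_atTop.2 fun t => ?_
    classical
    filter_upwards [Filter.eventually_ge_atTop (t.image Prod.fst ∪ t.image Prod.snd)] with s hs
    intro p hp
    rw [Finset.mem_product]
    exact ⟨hs (Finset.mem_union_left _ (Finset.mem_image_of_mem _ hp)),
      hs (Finset.mem_union_right _ (Finset.mem_image_of_mem _ hp))⟩
  have h3 := (Complex.continuous_re.tendsto _).comp (Filter.Tendsto.comp h h2)
  refine ge_of_tendsto' h3 fun s => ?_
  simp only [Function.comp, Finset.sum_product]
  exact hp s x.1

lemma path_summable {f h : ℤ → ℝ} (hf : Summable f) (hh : Summable h) (f0 : ∀ n, 0 ≤ f n) (h0 : ∀ n, 0 ≤ h n)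
    (m : ℕ) : Summable (fun x : Fin (m+1) → ℤ => f (x 0) * ∏ i : Fin m, h (x i.succ - x i.castSucc)) := by
  induction m with
  | zero =>
    simp only [Finset.univ_eq_empty, Finset.prod_empty, mul_one]
    exact ((Equiv.funUnique (Fin 1) ℤ).summable_iff (f := f)).2 hf
  | succ m ih =>
    rw [← ((Equiv.prodComm _ _).trans (Fin.snocEquiv (fun _ : Fin (m+2) => ℤ))).summable_iff]
    rw [summable_prod_of_nonneg]
    · have key : ∀ (y : Fin (m+1) → ℤ) (n : ℤ),
        ((fun x : Fin (m+1+1) → ℤ => f (x 0) * ∏ i : Fin (m+1), h (x i.succ - x i.castSucc)) ∘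
          ((Equiv.prodComm _ _).trans (Fin.snocEquiv (fun _ : Fin (m+2) => ℤ)))) (y, n)
          = (f (y 0) * ∏ i : Fin m, h (y i.succ - y i.castSucc)) * h (n - y (Fin.last m)) := by
        intro y n
        simp only [Function.comp, Equiv.trans_apply, Equiv.prodComm_apply, Prod.swap_prod_mk,
          Fin.snocEquiv_apply]
        rw [Fin.prod_univ_castSucc]
        have e0 : Fin.snoc (α := fun _ => ℤ) y n 0 = y 0 := by
          have : (0 : Fin (m+2)) = Fin.castSucc 0 := rfl
          rw [this, Fin.snoc_castSucc]
        simp only [← Fin.castSucc_succ, Fin.snoc_castSucc, Fin.succ_last, Fin.snoc_last, e0]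
        ring
      simp only [key]
      constructor
      · intro y
        exact (((Equiv.subRight (y (Fin.last m))).summable_iff (f := h)).2 hh).mul_left _
      · simp_rw [tsum_mul_left]
        have : ∀ c : ℤ, ∑' n, h (n - c) = ∑' n, h n := fun c => (Equiv.subRight c).tsum_eq h
        simp_rw [this]
        exact ih.mul_right _
    · intro p
      exact mul_nonneg (f0 _) (Finset.prod_nonneg fun _ _ => h0 _)

lemma one_le_prod_wt {m : ℕ} (d : Fin m → ℤ) : 1 ≤ ∏ i, wt (d i) := by
  calc (1:ℝ) = ∏ i : Fin m, 1 := by simp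
    _ ≤ _ := Finset.prod_le_prod (fun _ _ => zero_le_one) fun i _ => one_le_wt _

lemma path_bound {m : ℕ} (x : Fin (m+1) → ℤ) (i : Fin (m+1)) :
    wt (x i) ≤ wt (x 0) * ∏ j : Fin m, wt (x j.succ - x j.castSucc) := by
  induction m with
  | zero =>
    have : i = 0 := Fin.fin_one_eq_zero i
    subst this; simp
  | succ m ih =>
    refine Fin.cases ?_ (fun i => ?_) i
    · exact le_mul_of_one_le_right (wt_pos _).le (one_le_prod_wt _)
    · have h := ih (fun j => x j.succ) i
      refine h.trans ?_
      rw [Fin.prod_univ_succ, ← mul_assoc]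
      have h2 := wt_add (x 0) (x 1 - x 0)
      rw [add_sub_cancel] at h2
      refine mul_le_mul_of_nonneg_right ?_ (Finset.prod_nonneg fun _ _ => (wt_pos _).le)
      exact h2

lemma wt_neg (n : ℤ) : wt (-n) = wt n := by simp [wt]

lemma path_sign {m : ℕ} (hm : Even (m+1)) (x : Fin (m+1) → ℤ) (hx : ∏ i, x i < 0) (i : Fin (m+1)) :
    wt (x i) ≤ (∏ j : Fin m, wt (x j.succ - x j.castSucc)) ^ 2 := by
  set P := ∏ j : Fin m, wt (x j.succ - x j.castSucc) with hP
  have hd : ∀ i, wt (x i - x 0) ≤ P := by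
    intro i
    have := path_bound (fun j => x j - x 0) i
    have e : wt (x 0 - x 0) = 1 := by simp [wt]
    simpa only [e, one_mul, sub_sub_sub_cancel_right] using this
  have hP1 : 1 ≤ P := one_le_prod_wt _
  have hpair : ∀ i j, wt (x i - x j) ≤ P^2 := by
    intro i j
    have h := wt_add (x i - x 0) (-(x j - x 0))
    rw [wt_neg] at h
    have e : x i - x 0 + -(x j - x 0) = x i - x j := by ring
    rw [e] at h
    refine h.trans ?_
    rw [sq]
    exact mul_le_mul (hd i) (hd j) (wt_pos _).le (by linarith)
  have h1 : ∃ j, x j < 0 := by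
    by_contra! hcon
    exact absurd hx (not_lt.2 (Finset.prod_nonneg fun j _ => hcon j))
  have h2 : ∃ j, 0 < x j := by
    by_contra! hcon
    have : 0 ≤ ∏ j, (- x j) := Finset.prod_nonneg fun j _ => by linarith [hcon j]
    rw [Finset.prod_neg, Finset.card_univ, Fintype.card_fin, hm.neg_one_pow, one_mul] at this
    linarith
  obtain ⟨j, hj⟩ := h1
  obtain ⟨l, hl⟩ := h2
  rcases le_total 0 (x i) with h | h
  · refine le_trans ?_ (hpair i j)
    unfold wt
    have : |x i| ≤ |x i - x j| := by rw [abs_of_nonneg h, abs_of_nonneg] <;> linarith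
    have : |(x i:ℝ)| ≤ |((x i - x j : ℤ) : ℝ)| := by exact_mod_cast this
    linarith
  · refine le_trans ?_ (hpair i l)
    unfold wt
    have : |x i| ≤ |x i - x l| := by rw [abs_of_nonpos h, abs_of_nonpos] <;> linarith
    have : |(x i:ℝ)| ≤ |((x i - x l : ℤ) : ℝ)| := by exact_mod_cast this
    linarith

lemma summable_inv_wt : Summable (fun n : ℤ => (wt n ^ 2)⁻¹) := by
  have h := (Real.summable_one_div_int_add_rpow (1/2) 2).2 (by norm_num)
  refine Summable.of_nonneg_of_le (fun n => by have := wt_pos n; positivity) (fun n => ?_) h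
  rw [one_div]
  have hne : (n:ℝ) + 1/2 ≠ 0 := by
    intro h
    have : (2 * n + 1 : ℤ) = 0 := by
      have : (2 * (n:ℝ) + 1) = 0 := by linarith
      exact_mod_cast this
    omega
  have hp : 0 < |(n:ℝ) + 1/2| := abs_pos.2 hne
  have : |(n:ℝ) + 1/2| ^ (2:ℝ) = |(n:ℝ)+1/2| ^ 2 := by
    rw [← Real.rpow_natCast]; norm_num
  rw [this]
  apply inv_anti₀ (by positivity)
  gcongr
  unfold wt
  refine (abs_add_le _ _).trans ?_
  norm_num
  linarith

/-- sign-change weight -/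
def Wx (α : ℤ → ℂ) {m : ℕ} (x : Fin (m+1) → ℤ) : ℂ :=
  (((|∏ i, x i| - ∏ i, x i : ℤ) : ℝ) : ℂ) * ∏ i : Fin m, α (x i.succ - x i.castSucc)

lemma cast_abs_le_wt (n : ℤ) : |(n:ℝ)| ≤ wt n := by unfold wt; linarith

lemma Wx_summable {α : ℤ → ℂ} (hα : RD α) {m : ℕ} (hm : Even (m+1)) :
    Summable (fun x : Fin (m+1) → ℤ => ‖Wx α x‖) := by
  have h := (path_summable summable_inv_wt (hα (2*(m+1)+4)) (fun n => by have := wt_pos n; positivity)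
    (fun n => mul_nonneg (pow_nonneg (wt_pos n).le _) (norm_nonneg _)) m).mul_left 2
  refine Summable.of_nonneg_of_le (fun x => norm_nonneg _) (fun x => ?_) h
  by_cases hx : ∏ i, x i < 0
  · rw [Finset.prod_mul_distrib, Finset.prod_pow]
    set P := ∏ j : Fin m, wt (x j.succ - x j.castSucc) with hP
    have hs := path_sign hm x hx
    rw [← hP] at hs
    have hP0 : 0 ≤ P := Finset.prod_nonneg fun _ _ => (wt_pos _).le
    unfold Wx
    rw [norm_mul, norm_prod, abs_of_neg hx, Complex.norm_real, Real.norm_eq_abs]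
    have e : |((-∏ i, x i - ∏ i, x i : ℤ) : ℝ)| = 2 * ∏ i, |(x i : ℝ)| := by
      rw [← Finset.abs_prod]
      push_cast
      have : -∏ i, (x i:ℝ) - ∏ i, (x i:ℝ) = (-2) * ∏ i, (x i:ℝ) := by ring
      rw [this, abs_mul]; norm_num
    rw [e]
    have e2 : ∏ i, |(x i : ℝ)| ≤ (P^2)^(m+1) := by
      calc ∏ i, |(x i : ℝ)| ≤ ∏ i : Fin (m+1), P^2 :=
            Finset.prod_le_prod (fun _ _ => abs_nonneg _) fun i _ => (cast_abs_le_wt _).trans (hs i)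
        _ = _ := by simp
    have e3 : (P^2)^(m+1) ≤ (wt (x 0) ^ 2)⁻¹ * P ^ (2*(m+1)+4) := by
      have h0 := wt_pos (x 0)
      rw [inv_mul_eq_div, le_div_iff₀ (by positivity)]
      calc (P^2)^(m+1) * wt (x 0)^2 ≤ (P^2)^(m+1) * (P^2)^2 := by
            gcongr
            exact hs 0
        _ = _ := by ring
    have e4 : 0 ≤ ∏ i : Fin m, ‖α (x i.succ - x i.castSucc)‖ := Finset.prod_nonneg fun _ _ => norm_nonneg _
    calc (2 * ∏ i, |(x i : ℝ)|) * ∏ i : Fin m, ‖α (x i.succ - x i.castSucc)‖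
        ≤ 2 * ((wt (x 0) ^ 2)⁻¹ * P ^ (2*(m+1)+4)) * ∏ i : Fin m, ‖α (x i.succ - x i.castSucc)‖ := by
          gcongr
          exact e2.trans e3
      _ = _ := by ring
  · have : Wx α x = 0 := by
      unfold Wx
      rw [abs_of_nonneg (not_lt.1 hx)]; simp
    rw [this, norm_zero]
    have := wt_pos (x 0)
    exact mul_nonneg zero_le_two (mul_nonneg (by positivity) (Finset.prod_nonneg fun _ _ =>
      mul_nonneg (pow_nonneg (wt_pos _).le _) (norm_nonneg _)))

/-- path term -/
def Px (α : ℤ → ℂ) (lam : ℤ → ℝ) (v w : ℤ → ℂ) {m : ℕ} (x : Fin (m+1) → ℤ) : ℂ :=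
  ((∏ i, (lam (x i) : ℂ)) * ∏ i : Fin m, α (x i.succ - x i.castSucc)) * (v (x 0) * w (x (Fin.last m)))

lemma Px_summable {α v w : ℤ → ℂ} (hα : RD α) (hv : RD v) {M : ℝ} (hw : ∀ n, ‖w n‖ ≤ M)
    (lam : ℤ → ℝ) (hl : ∀ n, |lam n| ≤ |(n:ℝ)|) (m : ℕ) :
    Summable (fun x : Fin (m+1) → ℤ => Px α lam v w x) := by
  have h := (path_summable (hv (m+1)) (hα (m+1)) 
    (fun n => mul_nonneg (pow_nonneg (wt_pos n).le _) (norm_nonneg _))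
    (fun n => mul_nonneg (pow_nonneg (wt_pos n).le _) (norm_nonneg _)) m).mul_left M
  refine Summable.of_norm_bounded h (fun x => ?_)
  rw [Finset.prod_mul_distrib, Finset.prod_pow]
  have hs := path_bound x
  set P := ∏ j : Fin m, wt (x j.succ - x j.castSucc) with hP
  have hP0 : 0 ≤ P := Finset.prod_nonneg fun _ _ => (wt_pos _).le
  unfold Px
  rw [norm_mul, norm_mul, norm_mul, norm_prod, norm_prod]
  have e2 : ∏ i, ‖(lam (x i) : ℂ)‖ ≤ (wt (x 0) * P)^(m+1) := by
    calc ∏ i, ‖(lam (x i) : ℂ)‖ ≤ ∏ i : Fin (m+1), (wt (x 0) * P) :=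
          Finset.prod_le_prod (fun _ _ => norm_nonneg _) fun i _ => by
            rw [Complex.norm_real, Real.norm_eq_abs]
            exact ((hl _).trans (cast_abs_le_wt _)).trans (hs i)
      _ = _ := by simp
  have e4 : 0 ≤ ∏ i : Fin m, ‖α (x i.succ - x i.castSucc)‖ := Finset.prod_nonneg fun _ _ => norm_nonneg _
  have h0 := wt_pos (x 0)
  calc _ ≤ ((wt (x 0) * P)^(m+1) * ∏ i : Fin m, ‖α (x i.succ - x i.castSucc)‖) * (‖v (x 0)‖ * M) := by
        gcongr
        exact hw _
    _ = _ := by ring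

lemma Px_tsum {α w : ℤ → ℂ} (hα : RD α) {M : ℝ} (hw : ∀ n, ‖w n‖ ≤ M)
    (lam : ℤ → ℝ) (hl : ∀ n, |lam n| ≤ |(n:ℝ)|) (m : ℕ) (v : SS) :
    ∑' x : Fin (m+1) → ℤ, Px α lam v.1 w x =
      ∑' y, w y * (LL lam hl (((fun x => CL α hα (LL lam hl x))^[m]) v)).1 y := by
  induction m generalizing v with
  | zero =>
    rw [← (Equiv.funUnique (Fin 1) ℤ).symm.tsum_eq]
    refine tsum_congr fun y => ?_
    simp [Px, LL]
    ring
  | succ m ih =>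
    rw [Function.iterate_succ_apply, ← ih, ← ((Equiv.prodComm _ _).trans (Fin.consEquiv (fun _ : Fin (m+2) => ℤ))).tsum_eq,
      Summable.tsum_prod]
    · refine tsum_congr fun y => ?_
      have key : ∀ n : ℤ, Px α lam v.1 w (((Equiv.prodComm _ _).trans (Fin.consEquiv (fun _ : Fin (m+2) => ℤ))) (y, n))
          = ((∏ i, (lam (y i) : ℂ)) * ∏ i : Fin m, α (y i.succ - y i.castSucc)) * w (y (Fin.last m)) *
            (α (y 0 - n) * ((lam n : ℂ) * v.1 n)) := by
        intro n
        simp only [Equiv.trans_apply, Equiv.prodComm_apply, Prod.swap_prod_mk, Fin.consEquiv_apply, Px]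
        have e1 : ∏ i : Fin (m+2), (lam ((Fin.cons n y : Fin (m+2) → ℤ) i):ℂ) = lam n * ∏ i, (lam (y i) : ℂ) := by
          rw [Fin.prod_univ_succ]; simp only [Fin.cons_zero, Fin.cons_succ]
        have e2 : ∏ i : Fin (m+1), α ((Fin.cons n y : Fin (m+2) → ℤ) i.succ - (Fin.cons n y : Fin (m+2) → ℤ) i.castSucc)
            = α (y 0 - n) * ∏ i : Fin m, α (y i.succ - y i.castSucc) := by
          rw [Fin.prod_univ_succ]
          simp only [Fin.cons_zero, Fin.cons_succ, Fin.castSucc_zero, ← Fin.succ_castSucc]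
        rw [e1, e2]
        simp only [Fin.cons_zero, Fin.cons_succ, ← Fin.succ_last]
        ring
      simp_rw [key]
      rw [tsum_mul_left]
      have : (CL α hα (LL lam hl v)).1 (y 0) = ∑' n, α (y 0 - n) * ((lam n : ℂ) * v.1 n) := rfl
      rw [← this]
      unfold Px
      ring
    · exact (((Equiv.prodComm _ _).trans (Fin.consEquiv (fun _ : Fin (m+2) => ℤ))).summable_iff (f := fun x => Px α lam v.1 w x)).2
        (Px_summable hα v.2 hw lam hl (m+1))

/-- general even/odd version of the zeta-invariant -/
def Zgen (α : ℤ → ℂ) (M : ℕ) : ℂ :=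
  ∑' j : {j : Fin M → ℤ // ∑ i, j i = 0}, (Ncoef M j.val : ℂ) * ∏ i, α (j.val i)

/-- vertices of a path -/
def vtx {m : ℕ} (j : Fin (m+1) → ℤ) (n : ℤ) (i : Fin (m+1)) : ℤ := n + ∑ l ∈ Finset.Iio i, j l

lemma vtx_zero {m : ℕ} (j : Fin (m+1) → ℤ) (n : ℤ) : vtx j n 0 = n := by
  have : Finset.Iio (0 : Fin (m+1)) = ∅ := by ext; simp
  simp [vtx, this]

lemma vtx_succ {m : ℕ} (j : Fin (m+1) → ℤ) (n : ℤ) (i : Fin m) :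
    vtx j n i.succ = vtx j n i.castSucc + j i.castSucc := by
  have : Finset.Iio i.succ = insert i.castSucc (Finset.Iio i.castSucc) := by
    ext l
    simp only [Finset.mem_Iio, Finset.mem_insert, Fin.lt_def, Fin.ext_iff, Fin.val_succ, Fin.val_castSucc]
    omega
  unfold vtx
  rw [this, Finset.sum_insert (by simp)]
  ring

lemma vtx_last {m : ℕ} (j : Fin (m+1) → ℤ) (n : ℤ) :
    vtx j n (Fin.last m) + j (Fin.last m) = n + ∑ i, j i := by
  have : Finset.univ = insert (Fin.last m) (Finset.Iio (Fin.last m)) := by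
    ext l
    simp only [Finset.mem_Iio, Finset.mem_insert, Fin.lt_def, Fin.ext_iff, Fin.val_last, Finset.mem_univ, true_iff]
    have := l.isLt
    omega
  unfold vtx
  rw [this, Finset.sum_insert (by simp)]
  ring

/-- equivalence between increments and vertices -/
def vtxE (m : ℕ) : {j : Fin (m+1) → ℤ // ∑ i, j i = 0} × ℤ ≃ (Fin (m+1) → ℤ) :=
  Equiv.ofBijective (fun p => vtx p.1.1 p.2) (by
    constructor
    · rintro ⟨⟨j, hj⟩, n⟩ ⟨⟨j', hj'⟩, n'⟩ h
      simp only at h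
      have hn : n = n' := by
        have := congrFun h 0
        simpa [vtx_zero] using this
      have hjj : j = j' := by
        ext i
        refine Fin.lastCases ?_ (fun i => ?_) i
        · have h1 := vtx_last j n
          have h2 := vtx_last j' n'
          rw [h, hj] at h1
          rw [hj'] at h2
          linarith
        · have h1 := vtx_succ j n i
          have h2 := vtx_succ j' n' i
          rw [h] at h1
          linarith
      subst hn hjj
      rfl
    · intro x
      set j : Fin (m+1) → ℤ := Fin.snoc (α := fun _ => ℤ) (fun i : Fin m => x i.succ - x i.castSucc)
        (x 0 - x (Fin.last m)) with hj
      have hx : vtx j (x 0) = x := by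
        ext i
        refine Fin.induction ?_ (fun i ih => ?_) i
        · exact vtx_zero _ _
        · rw [vtx_succ, ih, hj, Fin.snoc_castSucc]; ring
      have hs : ∑ i, j i = 0 := by
        have h := vtx_last j (x 0)
        rw [hx, hj, Fin.snoc_last, ← hj] at h
        linarith
      exact ⟨(⟨j, hs⟩, x 0), hx⟩)

lemma Wα_summable {α : ℤ → ℂ} (hα : RD α) {m : ℕ} (hm : Even (m+1)) :
    Summable (fun x : Fin (m+1) → ℤ => Wx α x * α (x 0 - x (Fin.last m))) := by
  obtain ⟨M, hM, hb⟩ := hα.bdd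
  refine Summable.of_norm_bounded ((Wx_summable hα hm).mul_right M) (fun x => ?_)
  rw [norm_mul]
  exact mul_le_mul_of_nonneg_left (hb _) (norm_nonneg _)

lemma Zgen_eq {α : ℤ → ℂ} (hα : RD α) {m : ℕ} (hm : Even (m+1)) :
    Zgen α (m+1) = ∑' x : Fin (m+1) → ℤ, Wx α x * α (x 0 - x (Fin.last m)) := by
  have hs : Summable (fun c => Wx α (vtxE m c) * α ((vtxE m) c 0 - (vtxE m) c (Fin.last m))) :=
    ((vtxE m).summable_iff).2 (Wα_summable hα hm)
  rw [← (vtxE m).tsum_eq, hs.tsum_prod]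
  unfold Zgen
  refine tsum_congr fun j => ?_
  unfold Ncoef
  rw [Complex.ofReal_tsum, ← tsum_mul_right]
  refine tsum_congr fun n => ?_
  have e : vtxE m (j, n) = vtx j.1 n := rfl
  rw [e]
  unfold Wx
  rw [Fin.prod_univ_castSucc, mul_assoc]
  have e1 : prodPoly (m+1) j.1 n = ∏ i, vtx j.1 n i := rfl
  have e2 : ∀ i : Fin m, vtx j.1 n i.succ - vtx j.1 n i.castSucc = j.1 i.castSucc := fun i => by
    rw [vtx_succ]; ring
  have e3 : vtx j.1 n 0 - vtx j.1 n (Fin.last m) = j.1 (Fin.last m) := by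
    have := vtx_last j.1 n
    rw [j.2] at this
    rw [vtx_zero]; linarith
  simp only [e1, e2, e3]

lemma trace_sum {α : ℤ → ℂ} (hα : RD α) {m : ℕ} (hm : Even (m+1)) (v : ℤ → ℤ → ℂ)
    (hv : ∀ p q, HasSum (fun n => v n p * starRingEnd ℂ (v n q)) (α (p - q))) :
    HasSum (fun n => ∑' x : Fin (m+1) → ℤ, Wx α x * (v n (x 0) * starRingEnd ℂ (v n (x (Fin.last m)))))
      (Zgen α (m+1)) := by
  have hsq : ∀ p, HasSum (fun n => ‖v n p‖^2) (α 0).re := by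
    intro p
    have := Complex.hasSum_re (hv p p)
    rw [sub_self] at this
    convert this using 2 with n
    rw [Complex.mul_conj, Complex.ofReal_re, Complex.normSq_eq_norm_sq]
  have hb : ∀ n p q, ‖v n p * starRingEnd ℂ (v n q)‖ ≤ (‖v n p‖^2 + ‖v n q‖^2)/2 := by
    intro n p q
    rw [norm_mul, RCLike.norm_conj]
    nlinarith [sq_nonneg (‖v n p‖ - ‖v n q‖)]
  have hbs : ∀ p q, HasSum (fun n => (‖v n p‖^2 + ‖v n q‖^2)/2) (α 0).re := by
    intro p q
    have := ((hsq p).add (hsq q)).div_const 2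
    simpa using this
  have hns : ∀ p q, Summable (fun n => ‖v n p * starRingEnd ℂ (v n q)‖) := fun p q =>
    Summable.of_nonneg_of_le (fun _ => norm_nonneg _) (fun n => hb n p q) (hbs p q).summable
  have hnt : ∀ p q, ∑' n, ‖v n p * starRingEnd ℂ (v n q)‖ ≤ (α 0).re := fun p q => by
    rw [← (hbs p q).tsum_eq]
    exact (hns p q).tsum_le_tsum (fun n => hb n p q) (hbs p q).summable
  have hS : Summable (fun p : (Fin (m+1) → ℤ) × ℤ =>
      Wx α p.1 * (v p.2 (p.1 0) * starRingEnd ℂ (v p.2 (p.1 (Fin.last m))))) := by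
    refine Summable.of_norm ?_
    rw [summable_prod_of_nonneg (fun _ => norm_nonneg _)]
    constructor
    · intro x
      simp only [norm_mul (Wx α _)]
      exact (hns _ _).mul_left _
    · simp only [norm_mul (Wx α _), tsum_mul_left]
      refine Summable.of_nonneg_of_le (fun x => mul_nonneg (norm_nonneg _) (tsum_nonneg fun _ => norm_nonneg _))
        (fun x => ?_) ((Wx_summable hα hm).mul_right (α 0).re)
      exact mul_le_mul_of_nonneg_left (hnt _ _) (norm_nonneg _)
  have hS' := hS.prod_symm
  have hZ : Zgen α (m+1) = ∑' n, ∑' x : Fin (m+1) → ℤ, Wx α x * (v n (x 0) * starRingEnd ℂ (v n (x (Fin.last m)))) := by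
    rw [Zgen_eq hα hm, ← Summable.tsum_comm' (f := fun n x => Wx α x * (v n (x 0) * starRingEnd ℂ (v n (x (Fin.last m))))) hS' (fun n => hS'.prod_factor n) (fun x => hS.prod_factor x)]
    refine tsum_congr fun x => ?_
    rw [tsum_mul_left, (hv _ _).tsum_eq]
  rw [hZ]
  exact hS'.prod.hasSum

lemma abs_id_le : ∀ n : ℤ, |(fun n : ℤ => |(n:ℝ)|) n| ≤ |(n:ℝ)| := fun n => by simp

lemma Wx_tsum {α : ℤ → ℂ} (hα : RD α) {m : ℕ} (v : SS) :
    ∑' x : Fin (m+1) → ℤ, Wx α x * (v.1 (x 0) * starRingEnd ℂ (v.1 (x (Fin.last m)))) =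
      BB v (LL (fun n => |(n:ℝ)|) abs_id_le (((fun x => CL α hα (LL (fun n => |(n:ℝ)|) abs_id_le x))^[m]) v))
       - BB v (LL (fun n => (n:ℝ)) (fun _ => le_rfl) (((fun x => CL α hα (LL (fun n => (n:ℝ)) (fun _ => le_rfl) x))^[m]) v)) := by
  obtain ⟨M, hM, hb⟩ := RD.bdd v.2
  have hb' : ∀ n, ‖starRingEnd ℂ (v.1 n)‖ ≤ M := fun n => by rw [RCLike.norm_conj]; exact hb n
  rw [BB_apply, BB_apply, ← Px_tsum hα hb', ← Px_tsum hα hb', ← Summable.tsum_sub]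
  · refine tsum_congr fun x => ?_
    unfold Wx Px
    push_cast
    rw [Finset.abs_prod]
    push_cast
    ring
  · exact Px_summable hα v.2 hb' _ abs_id_le m
  · exact Px_summable hα v.2 hb' _ (fun _ => le_rfl) m

/-- multiplication by `|n|` -/
abbrev LamA : SS →ₗ[ℂ] SS := LL (fun n => |(n:ℝ)|) abs_id_le
/-- multiplication by `n` -/
abbrev LamD : SS →ₗ[ℂ] SS := LL (fun n => (n:ℝ)) (fun _ => le_rfl)

lemma LL_val (lam hl) (v : SS) (n : ℤ) : (LL lam hl v).1 n = (lam n : ℂ) * v.1 n := rfl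

lemma LamA_ge (v : SS) (τ : ℝ) (hτ : |τ| = 1) :
    (BB v ((τ:ℂ) • LamD v)).re ≤ (BB v (LamA v)).re := by
  rw [BB_apply, BB_apply, Complex.re_tsum (ip_summable v.2 (LamA v).2).of_norm,
    Complex.re_tsum (ip_summable v.2 ((τ:ℂ) • LamD v).2).of_norm]
  refine Summable.tsum_le_tsum (fun n => ?_)
    (Complex.hasSum_re (ip_summable v.2 ((τ:ℂ) • LamD v).2).of_norm.hasSum).summable
    (Complex.hasSum_re (ip_summable v.2 (LamA v).2).of_norm.hasSum).summable
  have e1 : starRingEnd ℂ (v.1 n) * (LamA v).1 n = ((|(n:ℝ)| * Complex.normSq (v.1 n) : ℝ) : ℂ) := by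
    rw [LL_val]; push_cast [Complex.normSq_eq_conj_mul_self]; ring
  have e2 : starRingEnd ℂ (v.1 n) * ((τ:ℂ) • LamD v).1 n = ((τ * n * Complex.normSq (v.1 n) : ℝ) : ℂ) := by
    have : ((τ:ℂ) • LamD v).1 n = τ * (LamD v).1 n := rfl
    rw [this, LL_val]; push_cast [Complex.normSq_eq_conj_mul_self]; ring
  rw [e1, e2, Complex.ofReal_re, Complex.ofReal_re]
  refine mul_le_mul_of_nonneg_right ?_ (Complex.normSq_nonneg _)
  calc τ * n ≤ |τ * n| := le_abs_self _
    _ = |(n:ℝ)| := by rw [abs_mul, hτ, one_mul]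

theorem seq_main {α : ℤ → ℂ} (hα : RD α) (hs : ∀ n, starRingEnd ℂ (α n) = α (-n))
    (hp : ∀ (s : Finset ℤ) (y : ℤ → ℂ), 0 ≤ (∑ n ∈ s, ∑ m ∈ s, starRingEnd ℂ (y n) * (α (n - m) * y m)).re)
    (v : ℤ → SS) (hv : ∀ p q, HasSum (fun n => (v n).1 p * starRingEnd ℂ ((v n).1 q)) (α (p - q)))
    (hD : ∀ n : ℤ, CL α hα (LamD (v n)) = (n:ℂ) • v n)
    (hn : ∀ n : ℤ, BB (v n) (LamD (v n)) = n)
    (h0 : LamA (v 0) = 0) (m : ℕ) (hm : Even (m+1)) :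
    (Zgen α (m+1)).re ≤ (Zgen α (m+3)).re := by
  have h1 := Complex.hasSum_re (trace_sum hα hm (fun n => (v n).1) hv)
  have hm' : Even (m+2+1) := by
    have : m+2+1 = (m+1)+2 := by ring
    rw [this]; exact hm.add even_two
  have h2 := Complex.hasSum_re (trace_sum hα hm' (fun n => (v n).1) hv)
  refine hasSum_le (fun n => ?_) h1 h2
  rw [Wx_tsum hα, Wx_tsum hα]
  have hit : ∀ i : ℕ, (fun x => CL α hα (LamD x))^[i] (v n) = ((n:ℂ)^i) • v n := by
    intro i
    induction i with
    | zero => simp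
    | succ i ih =>
      rw [Function.iterate_succ_apply', ih, map_smul, map_smul, hD, smul_smul, pow_succ]
  have hDn : ∀ i : ℕ, BB (v n) (LamD ((fun x => CL α hα (LamD x))^[i] (v n))) = (((n:ℝ)^(i+1) : ℝ) : ℂ) := by
    intro i
    rw [hit, map_smul, map_smul, hn, smul_eq_mul]
    push_cast; ring
  change (BB (v n) (LamA ((fun x => CL α hα (LamA x))^[m] (v n))) - BB (v n) (LamD ((fun x => CL α hα (LamD x))^[m] (v n)))).re
    ≤ (BB (v n) (LamA ((fun x => CL α hα (LamA x))^[m+2] (v n))) - BB (v n) (LamD ((fun x => CL α hα (LamD x))^[m+2] (v n)))).re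
  rw [hDn, hDn, Complex.sub_re, Complex.sub_re, Complex.ofReal_re, Complex.ofReal_re]
  rcases eq_or_ne n 0 with rfl | hne
  · have hz : ∀ i : ℕ, LamA ((fun x => CL α hα (LamA x))^[i] (v 0)) = 0 := by
      intro i
      induction i with
      | zero => exact h0
      | succ i ih => rw [Function.iterate_succ_apply', ih, map_zero, map_zero]
    rw [hz, hz]; simp
  · obtain ⟨τ, hτ, hτn⟩ : ∃ τ : ℝ, |τ| = 1 ∧ τ * n = |(n:ℝ)| := by
      rcases le_total 0 (n:ℝ) with h | h
      · exact ⟨1, by simp, by rw [abs_of_nonneg h]; ring⟩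
      · exact ⟨-1, by simp, by rw [abs_of_nonpos h]; ring⟩
    have hN : (1:ℝ) ≤ |(n:ℝ)| := by exact_mod_cast Int.one_le_abs hne
    have hvu : BB (v n) ((τ:ℂ) • LamD (v n)) = ((|(n:ℝ)| : ℝ) : ℂ) := by
      rw [map_smul, hn, smul_eq_mul, ← hτn]; push_cast; rfl
    have key := abs_growth BB (CL α hα) LamA BB_conj (CL_symm hα hs) (LL_symm _ _) (CL_pos hα hp)
      (fun x => LL_pos x _ _ (fun n => abs_nonneg _)) (v n) ((τ:ℂ) • LamD (v n)) |(n:ℝ)| hN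
      (by rw [map_smul, hD, smul_smul, ← hτn]; push_cast; rfl) hvu
      (by have := LamA_ge (v n) τ hτ
          rw [hvu, Complex.ofReal_re] at this
          exact this) m
    have e1 : |(n:ℝ)|^(m+1) = (n:ℝ)^(m+1) := hm.pow_abs _
    have e2 : |(n:ℝ)|^(m+3) = (n:ℝ)^(m+3) := hm'.pow_abs _
    rw [e1, e2] at key
    change _ ≤ _ - (n:ℝ)^(m+3)
    linarith

instance fact_two_pi : Fact (0 < 2 * Real.pi) := ⟨Real.two_pi_pos⟩

/-- lift of a continuous periodic function to the circle -/
def liftC (f : ℝ → ℂ) (hf : Continuous f) (hp : Function.Periodic f (2 * Real.pi)) :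
    C(AddCircle (2 * Real.pi), ℂ) :=
  ⟨hp.lift, continuous_coinduced_dom.2 hf⟩

lemma fourierCoeff_liftC (f : ℝ → ℂ) (hf : Continuous f) (hp : Function.Periodic f (2 * Real.pi)) (n : ℤ) :
    fourierCoeff (liftC f hf hp) n = fCoef f n := by
  rw [fourierCoeff_eq_intervalIntegral _ n 0, zero_add, fCoef, one_div, Complex.real_smul]
  congr 1
  refine intervalIntegral.integral_congr fun θ _ => ?_
  simp only [smul_eq_mul]
  rw [fourier_coe_apply, mul_comm]
  congr 1
  congr 1
  have : (Real.pi : ℂ) ≠ 0 := by exact_mod_cast Real.pi_ne_zero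
  push_cast
  field_simp

lemma parseval {f g : ℝ → ℂ} (hf : Continuous f) (hg : Continuous g)
    (pf : Function.Periodic f (2 * Real.pi)) (pg : Function.Periodic g (2 * Real.pi)) :
    HasSum (fun n => starRingEnd ℂ (fCoef f n) * fCoef g n)
      ((((2 * Real.pi)⁻¹ : ℝ) : ℂ) * ∫ θ in (0:ℝ)..(2 * Real.pi), starRingEnd ℂ (f θ) * g θ) := by
  have h := (fourierBasis (T := 2 * Real.pi)).hasSum_inner_mul_inner
    (ContinuousMap.toLp (E := ℂ) 2 AddCircle.haarAddCircle ℂ (liftC f hf pf))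
    (ContinuousMap.toLp (E := ℂ) 2 AddCircle.haarAddCircle ℂ (liftC g hg pg))
  rw [ContinuousMap.inner_toLp, AddCircle.integral_haarAddCircle,
    ← AddCircle.intervalIntegral_preimage (2 * Real.pi) 0, zero_add, Complex.real_smul] at h
  have e1 : (fun n => starRingEnd ℂ (fCoef f n) * fCoef g n) = (fun n => inner ℂ
      (ContinuousMap.toLp (E := ℂ) 2 AddCircle.haarAddCircle ℂ (liftC f hf pf)) (fourierBasis (T := 2 * Real.pi) n) *
      inner ℂ (fourierBasis (T := 2 * Real.pi) n)
        (ContinuousMap.toLp (E := ℂ) 2 AddCircle.haarAddCircle ℂ (liftC g hg pg))) := by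
    funext n
    rw [← inner_conj_symm, ← HilbertBasis.repr_apply_apply, ← HilbertBasis.repr_apply_apply,
      fourierBasis_repr, fourierBasis_repr, fourierCoeff_toLp, fourierCoeff_toLp,
      fourierCoeff_liftC, fourierCoeff_liftC]
  have e2 : (∫ θ in (0:ℝ)..(2 * Real.pi), starRingEnd ℂ (f θ) * g θ) =
      ∫ θ in (0:ℝ)..(2 * Real.pi), (liftC g hg pg) (θ : AddCircle (2 * Real.pi)) *
        starRingEnd ℂ ((liftC f hf pf) (θ : AddCircle (2 * Real.pi))) := by
    refine intervalIntegral.integral_congr fun θ _ => ?_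
    exact mul_comm _ _
  rw [e1, e2]
  exact h

lemma conj_intervalIntegral (f : ℝ → ℂ) (a b : ℝ) :
    starRingEnd ℂ (∫ θ in a..b, f θ) = ∫ θ in a..b, starRingEnd ℂ (f θ) := by
  simp only [intervalIntegral, map_sub, integral_conj]

lemma conj_two_pi_inv : starRingEnd ℂ (((2 * Real.pi)⁻¹ : ℝ) : ℂ) = (((2 * Real.pi)⁻¹ : ℝ) : ℂ) :=
  Complex.conj_ofReal _

lemma conj_fCoef (f : ℝ → ℂ) (n : ℤ) :
    starRingEnd ℂ (fCoef f n) = fCoef (fun θ => starRingEnd ℂ (f θ)) (-n) := by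
  unfold fCoef
  rw [map_mul, conj_two_pi_inv, conj_intervalIntegral]
  congr 1
  refine intervalIntegral.integral_congr fun θ _ => ?_
  simp only [map_mul]
  rw [← Complex.exp_conj]
  simp

lemma exp_periodic (n : ℤ) : Function.Periodic (fun θ : ℝ => Complex.exp (Complex.I * n * θ)) (2 * Real.pi) := by
  intro θ
  simp only
  rw [Complex.exp_eq_exp_iff_exists_int]
  exact ⟨n, by push_cast; ring⟩

lemma fCoef_mul {u w : ℝ → ℂ} (hu : Continuous u) (hw : Continuous w)
    (pu : Function.Periodic u (2 * Real.pi)) (pw : Function.Periodic w (2 * Real.pi)) (y : ℤ) :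
    HasSum (fun x => fCoef u (y - x) * fCoef w x) (fCoef (fun θ => u θ * w θ) y) := by
  have h := parseval (f := fun θ => starRingEnd ℂ (u θ) * Complex.exp (Complex.I * y * θ)) (g := w)
    (by fun_prop) hw
    (by
      intro θ
      have := exp_periodic y θ
      simp only at this
      simp only [pu θ, this]) pw
  convert h using 1
  · ext x
    congr 1
    rw [conj_fCoef]
    unfold fCoef
    congr 1
    refine intervalIntegral.integral_congr fun θ _ => ?_
    simp only [map_mul, Complex.conj_conj]
    rw [← Complex.exp_conj]
    simp only [map_mul, Complex.conj_I, Complex.conj_ofReal, map_intCast]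
    rw [mul_assoc (u θ), ← Complex.exp_add]
    congr 2
    push_cast
    ring
  · unfold fCoef
    congr 1
    refine intervalIntegral.integral_congr fun θ _ => ?_
    simp only [map_mul, Complex.conj_conj]
    rw [← Complex.exp_conj]
    simp only [map_mul, Complex.conj_I, Complex.conj_ofReal, map_intCast]
    ring

lemma fCoef_deriv {u u' : ℝ → ℂ} (hu : ∀ θ, HasDerivAt u (u' θ) θ) (hu' : Continuous u')
    (pu : Function.Periodic u (2 * Real.pi)) (n : ℤ) :
    fCoef u' n = Complex.I * n * fCoef u n := by
  unfold fCoef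
  have hv : ∀ θ : ℝ, HasDerivAt (fun θ : ℝ => Complex.exp (-Complex.I * n * θ))
      (-Complex.I * n * Complex.exp (-Complex.I * n * θ)) θ := by
    intro θ
    have h1 : HasDerivAt (fun θ : ℝ => -Complex.I * n * (θ:ℂ)) (-Complex.I * n) θ := by
      simpa using (Complex.ofRealCLM.hasDerivAt (x := θ)).const_mul (-Complex.I * n)
    have := h1.cexp
    convert this using 1
    ring
  have h := intervalIntegral.integral_mul_deriv_eq_deriv_mul (a := 0) (b := 2 * Real.pi)
    (fun θ _ => hu θ) (fun θ _ => hv θ) (hu'.intervalIntegrable _ _)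
    ((by fun_prop : Continuous _).intervalIntegrable _ _)
  have e1 : u (2 * Real.pi) = u 0 := by have := pu 0; rwa [zero_add] at this
  have e2 : Complex.exp (-Complex.I * n * ((2 * Real.pi : ℝ) : ℂ)) = Complex.exp (-Complex.I * n * ((0:ℝ):ℂ)) := by
    rw [Complex.exp_eq_exp_iff_exists_int]
    exact ⟨-n, by push_cast; ring⟩
  rw [e1, e2, sub_self, zero_sub] at h
  have e3 : ∫ θ in (0:ℝ)..2 * Real.pi, u θ * (-Complex.I * n * Complex.exp (-Complex.I * n * θ))
      = (-Complex.I * n) * ∫ θ in (0:ℝ)..2 * Real.pi, u θ * Complex.exp (-Complex.I * n * θ) := by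
    rw [← intervalIntegral.integral_const_mul]
    refine intervalIntegral.integral_congr fun θ _ => ?_
    ring
  rw [e3] at h
  linear_combination (((2 * Real.pi)⁻¹ : ℝ) : ℂ) * h

lemma fCoef_bdd {u : ℝ → ℂ} (hu : Continuous u) : ∃ C, ∀ n, ‖fCoef u n‖ ≤ C := by
  refine ⟨‖(((2 * Real.pi)⁻¹ : ℝ) : ℂ)‖ * ∫ θ in (0:ℝ)..(2 * Real.pi), ‖u θ‖, fun n => ?_⟩
  unfold fCoef
  rw [norm_mul]
  gcongr
  refine (intervalIntegral.norm_integral_le_integral_norm (μ := volume) (f := fun θ : ℝ => u θ * Complex.exp (-Complex.I * n * θ)) Real.two_pi_pos.le).trans (le_of_eq ?_)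
  refine intervalIntegral.integral_congr fun θ _ => ?_
  simp only [norm_mul]
  have : -Complex.I * n * θ = ((-n * θ : ℝ) : ℂ) * Complex.I := by push_cast; ring
  rw [this, Complex.norm_exp_ofReal_mul_I, mul_one]

lemma fCoef_sub {u w : ℝ → ℂ} (hu : Continuous u) (hw : Continuous w) (n : ℤ) :
    fCoef (fun θ => u θ - w θ) n = fCoef u n - fCoef w n := by
  unfold fCoef
  rw [← mul_sub, ← intervalIntegral.integral_sub]
  · congr 1
    refine intervalIntegral.integral_congr fun θ _ => ?_
    simp only; ring
  · exact (by fun_prop : Continuous _).intervalIntegrable _ _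
  · exact (by fun_prop : Continuous _).intervalIntegrable _ _

lemma fCoef_const_mul (c : ℂ) (u : ℝ → ℂ) (n : ℤ) :
    fCoef (fun θ => c * u θ) n = c * fCoef u n := by
  unfold fCoef
  rw [mul_left_comm, ← intervalIntegral.integral_const_mul c]
  congr 1
  refine intervalIntegral.integral_congr fun θ _ => ?_
  simp only; ring

lemma smooth_deriv {u : ℝ → ℂ} (hu : ContDiff ℝ (⊤ : ℕ∞) u) : ContDiff ℝ (⊤ : ℕ∞) (deriv u) :=
  (contDiff_infty_iff_deriv.1 hu).2

lemma smooth_hasDeriv {u : ℝ → ℂ} (hu : ContDiff ℝ (⊤ : ℕ∞) u) (θ : ℝ) : HasDerivAt u (deriv u θ) θ :=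
  ((contDiff_infty_iff_deriv.1 hu).1 θ).hasDerivAt

lemma periodic_deriv {u : ℝ → ℂ} {c : ℝ} (hu : Function.Periodic u c) : Function.Periodic (deriv u) c := by
  intro θ
  rw [← deriv_comp_add_const]
  congr 1
  ext x
  exact hu x

lemma fCoef_decay (N : ℕ) : ∀ u : ℝ → ℂ, ContDiff ℝ (⊤ : ℕ∞) u → Function.Periodic u (2 * Real.pi) →
    ∃ C, ∀ n : ℤ, (1 + (n:ℝ)^2)^N * ‖fCoef u n‖ ≤ C := by
  induction N with
  | zero => intro u hu _; simpa using fCoef_bdd hu.continuous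
  | succ N ih =>
    intro u hu pu
    have hd := smooth_deriv hu
    have hdd := smooth_deriv hd
    obtain ⟨C, hC⟩ := ih (fun θ => u θ - deriv (deriv u) θ) (hu.sub hdd)
      (fun θ => by simp only [pu θ, periodic_deriv (periodic_deriv pu) θ])
    refine ⟨C, fun n => ?_⟩
    have e : fCoef (fun θ => u θ - deriv (deriv u) θ) n = ((1 + (n:ℝ)^2 : ℝ) : ℂ) * fCoef u n := by
      rw [fCoef_sub hu.continuous hdd.continuous, fCoef_deriv (smooth_hasDeriv hd) hdd.continuous (periodic_deriv pu),
        fCoef_deriv (smooth_hasDeriv hu) hd.continuous pu]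
      push_cast
      linear_combination (-(n:ℂ)^2 * fCoef u n) * Complex.I_sq
    have := hC n
    rw [e, norm_mul, Complex.norm_real, Real.norm_eq_abs, abs_of_nonneg (by positivity)] at this
    calc _ = (1 + (n:ℝ)^2)^N * ((1 + (n:ℝ)^2) * ‖fCoef u n‖) := by ring
      _ ≤ C := this

lemma RD_fCoef {u : ℝ → ℂ} (hu : ContDiff ℝ (⊤ : ℕ∞) u) (pu : Function.Periodic u (2 * Real.pi)) :
    RD (fCoef u) := by
  intro N
  obtain ⟨C, hC⟩ := fCoef_decay (N+2) u hu pu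
  refine Summable.of_nonneg_of_le (fun n => mul_nonneg (pow_nonneg (wt_pos n).le _) (norm_nonneg _))
    (fun n => ?_) (summable_inv_wt.mul_left (2^(N+2) * C))
  have hw := wt_pos n
  rw [← div_eq_mul_inv, le_div_iff₀ (by positivity)]
  have h1 : wt n ≤ 2 * (1 + (n:ℝ)^2) := by
    unfold wt
    nlinarith [sq_abs (n:ℝ), sq_nonneg (|(n:ℝ)| - 1)]
  calc wt n ^ N * ‖fCoef u n‖ * wt n ^ 2 = wt n ^ (N+2) * ‖fCoef u n‖ := by ring
    _ ≤ (2 * (1 + (n:ℝ)^2))^(N+2) * ‖fCoef u n‖ := by gcongr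
    _ = 2^(N+2) * ((1 + (n:ℝ)^2)^(N+2) * ‖fCoef u n‖) := by rw [mul_pow]; ring
    _ ≤ 2^(N+2) * C := by gcongr; exact hC n

/-- The arc length type primitive of the reciprocal. -/
def phi (a : ℝ → ℝ) (θ : ℝ) : ℝ := ∫ t in (0:ℝ)..θ, (a t)⁻¹

/-- The pulled back exponential. -/
def ee (a : ℝ → ℝ) (n : ℤ) (θ : ℝ) : ℂ := Complex.exp (Complex.I * n * (phi a θ : ℂ))

/-- Its derivative up to the imaginary unit. -/
def ww (a : ℝ → ℝ) (n : ℤ) (θ : ℝ) : ℂ := (n:ℂ) * ((a θ)⁻¹ : ℝ) * ee a n θ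

section
variable {a : ℝ → ℝ} (ha : ContDiff ℝ (⊤ : ℕ∞) a) (haper : Function.Periodic a (2 * Real.pi))
    (hapos : ∀ θ, 0 < a θ)
    (hnorm : (∫ θ in (0:ℝ)..(2 * Real.pi), (a θ)⁻¹) = 2 * Real.pi)

lemma inv_smooth (ha : ContDiff ℝ (⊤ : ℕ∞) a) (hapos : ∀ θ, 0 < a θ) :
    ContDiff ℝ (⊤ : ℕ∞) (fun θ => (a θ)⁻¹) :=
  ha.inv (fun θ => (hapos θ).ne')

lemma phi_deriv (ha : ContDiff ℝ (⊤ : ℕ∞) a) (hapos : ∀ θ, 0 < a θ) (θ : ℝ) :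
    HasDerivAt (phi a) ((a θ)⁻¹) θ :=
  ((inv_smooth ha hapos).continuous.integral_hasStrictDerivAt 0 θ).hasDerivAt

lemma phi_smooth (ha : ContDiff ℝ (⊤ : ℕ∞) a) (hapos : ∀ θ, 0 < a θ) :
    ContDiff ℝ (⊤ : ℕ∞) (phi a) := by
  rw [contDiff_infty_iff_deriv]
  refine ⟨fun θ => (phi_deriv ha hapos θ).differentiableAt, ?_⟩
  rw [show deriv (phi a) = fun θ => (a θ)⁻¹ from funext fun θ => (phi_deriv ha hapos θ).deriv]
  exact inv_smooth ha hapos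

lemma phi_zero : phi a 0 = 0 := by simp [phi]

lemma phi_add (ha : ContDiff ℝ (⊤ : ℕ∞) a) (haper : Function.Periodic a (2 * Real.pi))
    (hapos : ∀ θ, 0 < a θ)
    (hnorm : (∫ θ in (0:ℝ)..(2 * Real.pi), (a θ)⁻¹) = 2 * Real.pi) (θ : ℝ) :
    phi a (θ + 2 * Real.pi) = phi a θ + 2 * Real.pi := by
  have hc := (inv_smooth ha hapos).continuous
  have hper : Function.Periodic (fun θ => (a θ)⁻¹) (2 * Real.pi) := fun θ => by simp only [haper θ]
  have h1 := hper.intervalIntegral_add_eq θ 0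
  rw [zero_add, hnorm] at h1
  unfold phi
  have h2 := intervalIntegral.integral_add_adjacent_intervals (hc.intervalIntegrable (μ := volume) 0 θ)
    (hc.intervalIntegrable (μ := volume) θ (θ + 2 * Real.pi))
  rw [← h2, h1]

lemma phi_strictMono (ha : ContDiff ℝ (⊤ : ℕ∞) a) (hapos : ∀ θ, 0 < a θ) : StrictMono (phi a) := by
  refine strictMono_of_deriv_pos fun θ => ?_
  rw [(phi_deriv ha hapos θ).deriv]
  exact inv_pos.2 (hapos θ)

lemma phi_surj (ha : ContDiff ℝ (⊤ : ℕ∞) a) (haper : Function.Periodic a (2 * Real.pi))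
    (hapos : ∀ θ, 0 < a θ)
    (hnorm : (∫ θ in (0:ℝ)..(2 * Real.pi), (a θ)⁻¹) = 2 * Real.pi) : Function.Surjective (phi a) := by
  have hp : Function.Periodic (fun θ => phi a θ - θ) (2 * Real.pi) := fun θ => by
    simp only [phi_add ha haper hapos hnorm]; ring
  have hk : ∀ k : ℤ, phi a (k * (2 * Real.pi)) = k * (2 * Real.pi) := fun k => by
    have h := hp.int_mul k 0
    simp only [zero_add, phi_zero, sub_zero] at h
    linarith
  have hc := (phi_smooth ha hapos).continuous
  refine hc.surjective ?_ ?_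
  · refine Filter.tendsto_atTop_atTop_of_monotone (phi_strictMono ha hapos).monotone fun b => ?_
    obtain ⟨n, hn⟩ := exists_nat_ge (b / (2 * Real.pi))
    refine ⟨((n:ℤ):ℝ) * (2 * Real.pi), ?_⟩
    rw [hk n]
    rw [div_le_iff₀ Real.two_pi_pos] at hn
    push_cast
    exact hn
  · refine Filter.tendsto_atBot_atBot_of_monotone (phi_strictMono ha hapos).monotone fun b => ?_
    obtain ⟨n, hn⟩ := exists_nat_ge (-b / (2 * Real.pi))
    refine ⟨((-n:ℤ):ℝ) * (2 * Real.pi), ?_⟩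
    rw [hk (-n)]
    rw [div_le_iff₀ Real.two_pi_pos] at hn
    push_cast
    linarith

lemma psi_exists (ha : ContDiff ℝ (⊤ : ℕ∞) a) (haper : Function.Periodic a (2 * Real.pi))
    (hapos : ∀ θ, 0 < a θ)
    (hnorm : (∫ θ in (0:ℝ)..(2 * Real.pi), (a θ)⁻¹) = 2 * Real.pi) :
    ∃ ψ : ℝ → ℝ, Continuous ψ ∧ (∀ θ, ψ (phi a θ) = θ) ∧ ∀ s, ψ (s + 2 * Real.pi) = ψ s + 2 * Real.pi := by
  let e := StrictMono.orderIsoOfSurjective (phi a) (phi_strictMono ha hapos) (phi_surj ha haper hapos hnorm)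
  have h1 : ∀ θ, e.symm (phi a θ) = θ := fun θ => e.symm_apply_apply θ
  refine ⟨e.symm, e.symm.continuous, h1, fun s => ?_⟩
  obtain ⟨θ, rfl⟩ := phi_surj ha haper hapos hnorm s
  rw [← phi_add ha haper hapos hnorm, h1, h1]

lemma ee_smooth (ha : ContDiff ℝ (⊤ : ℕ∞) a) (hapos : ∀ θ, 0 < a θ) (n : ℤ) :
    ContDiff ℝ (⊤ : ℕ∞) (ee a n) := by
  unfold ee
  exact (contDiff_const.mul (Complex.ofRealCLM.contDiff.comp (phi_smooth ha hapos))).cexp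

lemma ee_per (ha : ContDiff ℝ (⊤ : ℕ∞) a) (haper : Function.Periodic a (2 * Real.pi))
    (hapos : ∀ θ, 0 < a θ)
    (hnorm : (∫ θ in (0:ℝ)..(2 * Real.pi), (a θ)⁻¹) = 2 * Real.pi) (n : ℤ) :
    Function.Periodic (ee a n) (2 * Real.pi) := fun θ => by
  unfold ee
  rw [phi_add ha haper hapos hnorm]
  exact exp_periodic n (phi a θ)

lemma ww_cont (ha : ContDiff ℝ (⊤ : ℕ∞) a) (hapos : ∀ θ, 0 < a θ) (n : ℤ) : Continuous (ww a n) := by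
  unfold ww
  have h1 := (inv_smooth ha hapos).continuous
  have h2 := (ee_smooth ha hapos n).continuous
  exact (continuous_const.mul (Complex.continuous_ofReal.comp h1)).mul h2

lemma ww_per (ha : ContDiff ℝ (⊤ : ℕ∞) a) (haper : Function.Periodic a (2 * Real.pi))
    (hapos : ∀ θ, 0 < a θ)
    (hnorm : (∫ θ in (0:ℝ)..(2 * Real.pi), (a θ)⁻¹) = 2 * Real.pi) (n : ℤ) :
    Function.Periodic (ww a n) (2 * Real.pi) := fun θ => by
  unfold ww
  rw [haper θ, ee_per ha haper hapos hnorm n θ]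

lemma ee_deriv (ha : ContDiff ℝ (⊤ : ℕ∞) a) (hapos : ∀ θ, 0 < a θ) (n : ℤ) (θ : ℝ) :
    HasDerivAt (ee a n) (Complex.I * ww a n θ) θ := by
  have h1 : HasDerivAt (fun θ : ℝ => Complex.I * n * (phi a θ : ℂ)) (Complex.I * n * ((a θ)⁻¹ : ℝ)) θ :=
    ((phi_deriv ha hapos θ).ofReal_comp).const_mul (Complex.I * n)
  have h2 := h1.cexp
  unfold ww ee
  convert h2 using 1
  ring

lemma fCoef_ww (ha : ContDiff ℝ (⊤ : ℕ∞) a) (haper : Function.Periodic a (2 * Real.pi))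
    (hapos : ∀ θ, 0 < a θ)
    (hnorm : (∫ θ in (0:ℝ)..(2 * Real.pi), (a θ)⁻¹) = 2 * Real.pi) (n x : ℤ) :
    fCoef (ww a n) x = x * fCoef (ee a n) x := by
  have h := fCoef_deriv (ee_deriv ha hapos n) (continuous_const.mul (ww_cont ha hapos n))
    (ee_per ha haper hapos hnorm n) x
  rw [fCoef_const_mul, mul_assoc] at h
  exact mul_left_cancel₀ Complex.I_ne_zero h

lemma ee_conj_mul (n : ℤ) (θ : ℝ) : starRingEnd ℂ (ee a n θ) * ee a n θ = 1 := by
  unfold ee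
  rw [← Complex.exp_conj, ← Complex.exp_add]
  simp

lemma hv_main (ha : ContDiff ℝ (⊤ : ℕ∞) a) (haper : Function.Periodic a (2 * Real.pi))
    (hapos : ∀ θ, 0 < a θ)
    (hnorm : (∫ θ in (0:ℝ)..(2 * Real.pi), (a θ)⁻¹) = 2 * Real.pi) (p q : ℤ) :
    HasSum (fun n => fCoef (ee a n) p * starRingEnd ℂ (fCoef (ee a n) q))
      (fCoef (fun θ => (a θ : ℂ)) (p - q)) := by
  obtain ⟨ψ, hψc, hψ, hψa⟩ := psi_exists ha haper hapos hnorm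
  have hac := ha.continuous
  let F : ℤ → ℝ → ℂ := fun p s => (a (ψ s) : ℂ) * Complex.exp (Complex.I * p * (ψ s : ℂ))
  have hF : ∀ p, Continuous (F p) := fun p => by
    simp only [F]
    fun_prop
  have pF : ∀ p, Function.Periodic (F p) (2 * Real.pi) := fun p s => by
    have := exp_periodic p (ψ s)
    simp only at this
    simp only [F, hψa, haper (ψ s), this]
  have cov : ∀ G : ℝ → ℂ, Continuous G → ∫ s in (0:ℝ)..(2 * Real.pi), G s =
      ∫ θ in (0:ℝ)..(2 * Real.pi), (((a θ)⁻¹ : ℝ) : ℂ) * G (phi a θ) := fun G hG => by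
    have h := intervalIntegral.integral_deriv_smul_comp (a := 0) (b := 2 * Real.pi) (f := phi a)
      (f' := fun θ => (a θ)⁻¹) (g := G) (fun θ _ => phi_deriv ha hapos θ)
      (inv_smooth ha hapos).continuous.continuousOn hG
    have h2 : phi a (2 * Real.pi) = 2 * Real.pi := hnorm
    rw [phi_zero, h2] at h
    rw [← h]
    refine intervalIntegral.integral_congr fun θ _ => ?_
    simp only [Complex.real_smul, Function.comp]
  have hinv : ∀ θ, (((a θ)⁻¹ : ℝ) : ℂ) * (a θ : ℂ) = 1 := fun θ => by
    rw [← Complex.ofReal_mul, inv_mul_cancel₀ (hapos θ).ne', Complex.ofReal_one]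
  have key : ∀ (p n : ℤ), fCoef (F p) n = starRingEnd ℂ (fCoef (ee a n) p) := fun p n => by
    rw [conj_fCoef]
    unfold fCoef
    rw [cov (fun θ => F p θ * Complex.exp (-Complex.I * n * θ)) ((hF p).mul (by fun_prop))]
    congr 1
    refine intervalIntegral.integral_congr fun θ _ => ?_
    simp only [F, hψ, ee]
    rw [← Complex.exp_conj]
    simp only [map_mul, Complex.conj_I, Complex.conj_ofReal, map_intCast]
    push_cast
    have := hinv θ
    push_cast at this
    have e1 : Complex.exp (-Complex.I * -(p:ℂ) * θ) = Complex.exp (Complex.I * p * θ) := by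
      congr 1; ring
    rw [e1]
    linear_combination (Complex.exp (Complex.I * p * θ) * Complex.exp (-Complex.I * n * (phi a θ : ℂ))) * this
  have h := parseval (hF p) (hF q) (pF p) (pF q)
  simp only [key, Complex.conj_conj] at h
  convert h using 1
  unfold fCoef
  rw [cov (fun θ => starRingEnd ℂ (F p θ) * F q θ) ((Complex.continuous_conj.comp (hF p)).mul (hF q))]
  congr 1
  refine intervalIntegral.integral_congr fun θ _ => ?_
  simp only [F, hψ, Function.comp]
  rw [map_mul, ← Complex.exp_conj]
  simp only [map_mul, Complex.conj_I, Complex.conj_ofReal, map_intCast]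
  have e1 : Complex.exp (-Complex.I * ((p - q : ℤ) : ℂ) * θ) =
      Complex.exp (-Complex.I * p * θ) * Complex.exp (Complex.I * q * θ) := by
    rw [← Complex.exp_add]; congr 1; push_cast; ring
  rw [e1]
  linear_combination (-(a θ : ℂ) * Complex.exp (-Complex.I * p * θ) * Complex.exp (Complex.I * q * θ)) * hinv θ

end

lemma hp_of_hv {α : ℤ → ℂ} (v : ℤ → ℤ → ℂ)
    (hv : ∀ p q, HasSum (fun n => v n p * starRingEnd ℂ (v n q)) (α (p - q)))
    (s : Finset ℤ) (y : ℤ → ℂ) :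
    0 ≤ (∑ n ∈ s, ∑ m ∈ s, starRingEnd ℂ (y n) * (α (n - m) * y m)).re := by
  have h : HasSum (fun k => ∑ n ∈ s, ∑ m ∈ s,
      starRingEnd ℂ (y n) * ((v k n * starRingEnd ℂ (v k m)) * y m))
      (∑ n ∈ s, ∑ m ∈ s, starRingEnd ℂ (y n) * (α (n - m) * y m)) :=
    hasSum_sum fun n _ => hasSum_sum fun m _ => ((hv n m).mul_right _).mul_left _
  refine (Complex.hasSum_re h).nonneg fun k => ?_
  have e : (∑ n ∈ s, ∑ m ∈ s, starRingEnd ℂ (y n) * ((v k n * starRingEnd ℂ (v k m)) * y m))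
      = (∑ n ∈ s, starRingEnd ℂ (y n) * v k n) * starRingEnd ℂ (∑ n ∈ s, starRingEnd ℂ (y n) * v k n) := by
    rw [map_sum, Finset.sum_mul_sum]
    refine Finset.sum_congr rfl fun n _ => Finset.sum_congr rfl fun m _ => ?_
    rw [map_mul, Complex.conj_conj]; ring
  rw [e, Complex.mul_conj, Complex.ofReal_re]
  exact Complex.normSq_nonneg _

/-- **Monotonicity of zeta-invariants (from inequality (2.24) of the paper).** For `a`
smooth, `2π`-periodic, positive and normalized by `∫₀^{2π} a⁻¹ = 2π`, the zeta-invariants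
satisfy `Z_{k+1}(a) ≥ Z_k(a)` for all `k ≥ 1`. -/
theorem zetaInv_monotone
    (a : ℝ → ℝ) (ha : ContDiff ℝ (⊤ : ℕ∞) a) (haper : Function.Periodic a (2 * Real.pi))
    (hapos : ∀ θ, 0 < a θ)
    (hnorm : (∫ θ in (0:ℝ)..(2 * Real.pi), (a θ)⁻¹) = 2 * Real.pi) :
    ∀ k : ℕ, 1 ≤ k → (ZetaInv k a).re ≤ (ZetaInv (k + 1) a).re := by
  have hcs : ContDiff ℝ (⊤ : ℕ∞) (fun θ => (a θ : ℂ)) := Complex.ofRealCLM.contDiff.comp ha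
  have hcp : Function.Periodic (fun θ => (a θ : ℂ)) (2 * Real.pi) := fun θ => by simp only [haper θ]
  have hα := RD_fCoef hcs hcp
  have hes := ee_smooth ha hapos
  have hep := ee_per ha haper hapos hnorm
  let v : ℤ → SS := fun n => ⟨fCoef (ee a n), RD_fCoef (hes n) (hep n)⟩
  have hv : ∀ p q, HasSum (fun n => (v n).1 p * starRingEnd ℂ ((v n).1 q))
      (fCoef (fun θ => (a θ : ℂ)) (p - q)) := hv_main ha haper hapos hnorm
  have hLD : ∀ n x : ℤ, (LamD (v n)).1 x = fCoef (ww a n) x := fun n x => by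
    rw [fCoef_ww ha haper hapos hnorm]
    simp only [LamD, LL_val, v]
    push_cast
    rfl
  have hinv : ∀ θ, (a θ : ℂ) * (((a θ)⁻¹ : ℝ) : ℂ) = 1 := fun θ => by
    rw [← Complex.ofReal_mul, mul_inv_cancel₀ (hapos θ).ne', Complex.ofReal_one]
  have main := fun m hm => seq_main hα
    (fun n => by rw [conj_fCoef]; simp only [Complex.conj_ofReal])
    (hp_of_hv (fun n => (v n).1) hv) v hv
    (fun n => by
      ext y
      have h := (fCoef_mul hcs.continuous (ww_cont ha hapos n) hcp (ww_per ha haper hapos hnorm n) y).tsum_eq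
      have e : (fun θ => (a θ : ℂ) * ww a n θ) = fun θ => (n:ℂ) * ee a n θ := by
        funext θ
        unfold ww
        linear_combination ((n:ℂ) * ee a n θ) * hinv θ
      rw [e, fCoef_const_mul] at h
      change ∑' x, _ * (LamD (v n)).1 x = (n:ℂ) * fCoef (ee a n) y
      rw [← h]
      simp only [hLD])
    (fun n => by
      have h := (parseval (hes n).continuous (ww_cont ha hapos n) (hep n)
        (ww_per ha haper hapos hnorm n)).tsum_eq
      rw [BB_apply]
      simp only [hLD]
      change ∑' x, starRingEnd ℂ (fCoef (ee a n) x) * _ = _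
      rw [h]
      have e : ∀ θ, starRingEnd ℂ (ee a n θ) * ww a n θ = (n:ℂ) * (((a θ)⁻¹ : ℝ) : ℂ) := fun θ => by
        unfold ww
        linear_combination ((n:ℂ) * (((a θ)⁻¹ : ℝ) : ℂ)) * ee_conj_mul (a := a) n θ
      simp only [e]
      rw [intervalIntegral.integral_const_mul, intervalIntegral.integral_ofReal, hnorm, mul_left_comm,
        ← Complex.ofReal_mul, inv_mul_cancel₀ Real.two_pi_pos.ne', Complex.ofReal_one, mul_one])
    (by
      ext p
      have h := fCoef_ww ha haper hapos hnorm 0 p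
      have e : ww a 0 = fun _ => 0 := by funext θ; simp [ww]
      have e2 : fCoef (fun _ => 0) p = 0 := by simp [fCoef]
      rw [e, e2] at h
      simp only [LamA, LL_val]
      change _ * fCoef (ee a 0) p = 0
      rcases mul_eq_zero.1 h.symm with h | h
      · have : p = 0 := by exact_mod_cast h
        subst this
        simp
      · rw [h, mul_zero]) m hm
  intro k hk
  obtain ⟨k, rfl⟩ : ∃ l, k = l + 1 := ⟨k - 1, by omega⟩
  exact main (2 * k + 1) ⟨k + 1, by ring⟩
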